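/- arXiv:2003.10161 — 2 statements merged into one kernel-verified Lean document; each statement's English description precedes it below -/
import Mathlib

section
/- For every r ≥ 1 and N ≥ 1, there exists an r-colouring of [N] = {1,...,N} with at most O(N^{3/2^r}) monochromatic solutions (x, y, z) to the equation x − y = z². -/
/-!
If `x - y = z²` with `x, y, z ∈ [N]` then `z ≤ √N`. Hence a colour class contained in `(√N, N]`
contains no solution at all, and giving this interval a colour of its own reduces the problem for
`N` and `r + 1` colours to the problem for `√N` and `r` colours. Once a single colour is left the
interval has been shrunk to `[M]` with `M ≤ N ^ (1 / 2 ^ (r - 1))`, and it contains at most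
`M * √M = M ^ (3 / 2)` solutions, because `y` and `z` determine `x`.
-/

section

variable {κ : Type*} {r N : ℕ} {x y z : ℤ}

/-- The solutions `(x, y, z)` of `x - y = z²` in `[N]³` that are monochromatic for the colouring
`c`. Colourings are defined on all of `ℤ`, but only their values on `[N]` matter. -/
noncomputable def monochromaticSolutions [DecidableEq κ] (c : ℤ → κ) (N : ℕ) : Finset (ℤ × ℤ × ℤ) :=
  (Finset.Icc 1 (N : ℤ) ×ˢ Finset.Icc 1 (N : ℤ) ×ˢ Finset.Icc 1 (N : ℤ)).filter
    (fun p => p.1 - p.2.1 = p.2.2 ^ 2 ∧ c p.1 = c p.2.1 ∧ c p.2.1 = c p.2.2)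

theorem mem_monochromaticSolutions [DecidableEq κ] {c : ℤ → κ} :
    (x, y, z) ∈ monochromaticSolutions c N ↔
      ((1 ≤ x ∧ x ≤ N) ∧ (1 ≤ y ∧ y ≤ N) ∧ (1 ≤ z ∧ z ≤ N)) ∧
        x - y = z ^ 2 ∧ c x = c y ∧ c y = c z := by
  simp only [monochromaticSolutions, Finset.mem_filter, Finset.mem_product, Finset.mem_Icc]

theorem le_natSqrt_of_sub_eq_sq (hx : x ≤ N) (hy : 0 ≤ y) (h : x - y = z ^ 2) :
    z ≤ N.sqrt := by
  have natAbs_sq_le : z.natAbs ^ 2 ≤ N := by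
    zify
    rw [sq_abs]
    linarith
  calc z ≤ z.natAbs := Int.le_natAbs
    _ ≤ N.sqrt := mod_cast Nat.le_sqrt'.mpr natAbs_sq_le

theorem card_monochromaticSolutions_le [DecidableEq κ] (c : ℤ → κ) (N : ℕ) :
    (monochromaticSolutions c N).card ≤ N * N.sqrt := by
  have card_box : (Finset.Icc 1 (N : ℤ) ×ˢ Finset.Icc 1 (N.sqrt : ℤ)).card = N * N.sqrt := by
    simp
  rw [← card_box]
  refine Finset.card_le_card_of_injOn Prod.snd ?_ ?_
  · rintro ⟨x, y, z⟩ hp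
    obtain ⟨⟨hx, hy, hz⟩, h, -⟩ := mem_monochromaticSolutions.mp hp
    have hz_le : z ≤ N.sqrt := le_natSqrt_of_sub_eq_sq hx.2 (by lia) h
    simp [hy, hz.1, hz_le]
  · rintro ⟨x, y, z⟩ hp ⟨x', y', z'⟩ hp' hyz
    obtain ⟨rfl, rfl⟩ : y = y' ∧ z = z' := Prod.mk.inj hyz
    have h := (mem_monochromaticSolutions.mp hp).2.1
    have h' := (mem_monochromaticSolutions.mp hp').2.1
    rw [sub_left_injective (h.trans h'.symm)]

/-- The colouring that agrees with `c` on `(-∞, M]` and gives all integers above `M` one new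
colour, encoded as the last one. -/
def addColourAbove (M : ℤ) (c : ℤ → Fin r) (x : ℤ) : Fin (r + 1) :=
  if x ≤ M then (c x).castSucc else Fin.last r

theorem addColourAbove_eq_iff_of_le {M : ℤ} {c : ℤ → Fin r} (hy : y ≤ M) :
    addColourAbove M c x = addColourAbove M c y ↔ x ≤ M ∧ c x = c y := by
  by_cases hx : x ≤ M
  · simp [addColourAbove, hx, hy]
  · simp [addColourAbove, hx, hy, (Fin.castSucc_ne_last (c y)).symm]

theorem monochromaticSolutions_addColourAbove_subset (c : ℤ → Fin r) (N : ℕ) :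
    monochromaticSolutions (addColourAbove N.sqrt c) N ⊆ monochromaticSolutions c N.sqrt := by
  rintro ⟨x, y, z⟩ hp
  obtain ⟨⟨hx, hy, hz⟩, h, hxy, hyz⟩ := mem_monochromaticSolutions.mp hp
  have hz_le : z ≤ N.sqrt := le_natSqrt_of_sub_eq_sq hx.2 (by lia) h
  obtain ⟨hy_le, hcyz⟩ := (addColourAbove_eq_iff_of_le hz_le).mp hyz
  obtain ⟨hx_le, hcxy⟩ := (addColourAbove_eq_iff_of_le hy_le).mp hxy
  exact mem_monochromaticSolutions.mpr
    ⟨⟨⟨hx.1, hx_le⟩, ⟨hy.1, hy_le⟩, ⟨hz.1, hz_le⟩⟩, h, hcxy, hcyz⟩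

/-- The colouring of `[N]` by the `r + 1` intervals `(N^{1/2}, N]`, `(N^{1/4}, N^{1/2}]`, …,
`[1, N^{1/2^r}]`, which get the colours `r`, `r - 1`, …, `0`. The endpoints are iterated integer
square roots of `N`. -/
def dyadicColouring : (r : ℕ) → ℕ → ℤ → Fin (r + 1)
  | 0, _ => fun _ => 0
  | r + 1, N => addColourAbove N.sqrt (dyadicColouring r N.sqrt)

theorem natSqrt_rpow_le (N : ℕ) {s : ℝ} (hs : 0 ≤ s) :
    (N.sqrt : ℝ) ^ s ≤ (N : ℝ) ^ (s / 2) := by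
  calc (N.sqrt : ℝ) ^ s ≤ √(N : ℝ) ^ s := by gcongr; exact Real.nat_sqrt_le_real_sqrt
    _ = (N : ℝ) ^ (s / 2) := (Real.rpow_div_two_eq_sqrt s N.cast_nonneg).symm

theorem mul_natSqrt_le_rpow (N : ℕ) : (N * N.sqrt : ℝ) ≤ (N : ℝ) ^ (3 / 2 : ℝ) := by
  calc (N * N.sqrt : ℝ) ≤ N * √(N : ℝ) := by gcongr; exact Real.nat_sqrt_le_real_sqrt
    _ = (N : ℝ) ^ (1 + 1 / 2 : ℝ) := by
      rw [Real.rpow_add' N.cast_nonneg (by norm_num), Real.rpow_one, Real.sqrt_eq_rpow]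
    _ = (N : ℝ) ^ (3 / 2 : ℝ) := by norm_num

theorem card_monochromaticSolutions_dyadicColouring_le (r N : ℕ) :
    ((monochromaticSolutions (dyadicColouring r N) N).card : ℝ) ≤
      (N : ℝ) ^ ((3 : ℝ) / 2 ^ (r + 1)) := by
  induction r generalizing N with
  | zero =>
    calc ((monochromaticSolutions (dyadicColouring 0 N) N).card : ℝ)
        ≤ N * N.sqrt := mod_cast card_monochromaticSolutions_le _ N
      _ ≤ (N : ℝ) ^ ((3 : ℝ) / 2 ^ (0 + 1)) := by simpa using mul_natSqrt_le_rpow N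
  | succ r ih =>
    calc ((monochromaticSolutions (dyadicColouring (r + 1) N) N).card : ℝ)
        ≤ (monochromaticSolutions (dyadicColouring r N.sqrt) N.sqrt).card :=
          mod_cast Finset.card_le_card (monochromaticSolutions_addColourAbove_subset _ N)
      _ ≤ (N.sqrt : ℝ) ^ ((3 : ℝ) / 2 ^ (r + 1)) := ih N.sqrt
      _ ≤ (N : ℝ) ^ ((3 : ℝ) / 2 ^ (r + 1) / 2) := natSqrt_rpow_le N (by positivity)
      _ = (N : ℝ) ^ ((3 : ℝ) / 2 ^ (r + 1 + 1)) := by rw [div_div, ← pow_succ]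

end

/-- There exists an `r`-colouring of `[N]` with at most `O_r(N^{3/2^r})` monochromatic
solutions to `x − y = z²`. -/
theorem colouring_few_monochromatic_solutions :
    ∀ r : ℕ, 1 ≤ r → ∃ C : ℝ, 0 < C ∧ ∀ N : ℕ, 1 ≤ N →
      ∃ c : ℤ → Fin r,
        (((Finset.Icc 1 (N : ℤ) ×ˢ Finset.Icc 1 (N : ℤ) ×ˢ Finset.Icc 1 (N : ℤ)).filter
            (fun p => p.1 - p.2.1 = p.2.2 ^ 2 ∧ c p.1 = c p.2.1 ∧ c p.2.1 = c p.2.2)).card : ℝ) ≤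
          C * (N : ℝ) ^ ((3 : ℝ) / 2 ^ r) := by
  intro r hr
  obtain ⟨k, rfl⟩ := Nat.exists_eq_add_of_le' hr
  refine ⟨1, one_pos, fun N _ => ⟨dyadicColouring k N, ?_⟩⟩
  rw [one_mul]
  exact card_monochromaticSolutions_dyadicColouring_le k N
end

section
/- For any nonzero integers a₁, ..., a_s with s ≥ 5, the number of solutions (x₁, ..., x_s) ∈ [N]^s to a₁x₁² + ⋯ + a_s x_s² = 0 is O(N^{s−2}), where the implied constant depends on the coefficients. -/
/-!
Reducing the equation modulo a prime `P > N²` and expanding in additive characters bounds the number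
of solutions by the average over `t` modulo `P` of a product of quadratic Weyl sums at the
frequencies `aᵢt/P`. Five factors with `aᵢ ≠ 0` are replaced by the sum of their fifth powers, the
others are at most `N`, and `t ↦ aᵢt` permutes the residues. What is left is to show that the fifth
moment of the Weyl sum `W(t/P)` is `O(PN³)`.

Weyl differencing, with a Dirichlet approximation `a/q` to `2θ` where `q ≤ 2N`, gives
`|W(θ)|² ≪ N log N + N² / √(q(1 + N²‖2qθ‖))`. The second term comes from the differences divisible
by `q`, the first from all others. After raising to the power `5/2` the first term is `O(N³)`; the
second is `N⁵ (q(1 + N²‖2qθ‖))^(-5/4)`, and because `5/4 > 1` its sum over all `q` and all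
`θ = t/P` is `O(N⁵ · P/N²)`.
-/

open Finset
open AddCircle (toCircle)
open ZMod (toAddCircle)

/-! ### Linear exponential sums -/

theorem exists_coe_eq_and_norm_eq_abs (θ : UnitAddCircle) :
    ∃ x : ℝ, (x : UnitAddCircle) = θ ∧ ‖θ‖ = |x| := by
  induction θ using QuotientAddGroup.induction_on with
  | H y => exact ⟨y - round y, by simp, UnitAddCircle.norm_eq⟩

theorem norm_nsmul_of_mul_norm_le_half {n : ℕ} {θ : UnitAddCircle} (h : n * ‖θ‖ ≤ 1 / 2) :
    ‖n • θ‖ = n * ‖θ‖ := by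
  obtain ⟨x, rfl, hx⟩ := exists_coe_eq_and_norm_eq_abs θ
  rw [hx] at h ⊢
  rw [← AddCircle.coe_nsmul, nsmul_eq_mul, (AddCircle.norm_coe_eq_abs_iff 1 one_ne_zero).2,
    abs_mul, Nat.abs_cast]
  rwa [abs_mul, Nat.abs_cast, abs_one]

theorem four_mul_norm_le_norm_toCircle_sub_one (θ : UnitAddCircle) :
    4 * ‖θ‖ ≤ ‖(toCircle θ : ℂ) - 1‖ := by
  obtain ⟨x, rfl, norm_eq_abs⟩ := exists_coe_eq_and_norm_eq_abs θ
  have hx : |x| ≤ 1 / 2 := by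
    simpa [norm_eq_abs] using AddCircle.norm_le_half_period 1 (x := (x : UnitAddCircle)) one_ne_zero
  have abs_le_sin : 2 * |x| ≤ |Real.sin (Real.pi * x)| := by
    have h := Real.mul_abs_le_abs_sin (x := Real.pi * x) (by
      rw [abs_mul, abs_of_pos Real.pi_pos]; nlinarith [Real.pi_pos])
    rwa [abs_mul, abs_of_pos Real.pi_pos, ← mul_assoc, div_mul_cancel₀ _ Real.pi_ne_zero] at h
  have toCircle_eq : (toCircle (x : UnitAddCircle) : ℂ) =
      Complex.exp (Complex.I * ((2 * Real.pi * x : ℝ) : ℂ)) := by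
    rw [AddCircle.toCircle_apply_mk, Circle.coe_exp, div_one, mul_comm]
  rw [norm_eq_abs, toCircle_eq, Complex.norm_exp_I_mul_ofReal_sub_one, norm_mul, Real.norm_ofNat,
    Real.norm_eq_abs, mul_assoc, mul_div_cancel_left₀ _ two_ne_zero]
  linarith

theorem norm_sum_toCircle_nsmul_le (θ : UnitAddCircle) (n : ℕ) :
    ‖∑ y ∈ range n, (toCircle (y • θ) : ℂ)‖ ≤ n :=
  (norm_sum_le _ _).trans (by simp [Circle.norm_coe])

theorem norm_sum_toCircle_nsmul_mul_norm_le (θ : UnitAddCircle) (n : ℕ) :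
    ‖∑ y ∈ range n, (toCircle (y • θ) : ℂ)‖ * ‖θ‖ ≤ 1 / 2 := by
  set S := ∑ y ∈ range n, (toCircle (y • θ) : ℂ) with hS
  have geom : S * ((toCircle θ : ℂ) - 1) = (toCircle θ : ℂ) ^ n - 1 := by
    simp only [hS, AddCircle.toCircle_nsmul, Circle.coe_pow, geom_sum_mul]
  have : ‖S‖ * (4 * ‖θ‖) ≤ 2 := calc
    ‖S‖ * (4 * ‖θ‖) ≤ ‖S‖ * ‖(toCircle θ : ℂ) - 1‖ := by
      gcongr; exact four_mul_norm_le_norm_toCircle_sub_one θ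
    _ = ‖(toCircle θ : ℂ) ^ n - 1‖ := by rw [← norm_mul, geom]
    _ ≤ ‖(toCircle θ : ℂ) ^ n‖ + ‖(1 : ℂ)‖ := norm_sub_le _ _
    _ = 2 := by rw [norm_pow, Circle.norm_coe]; norm_num
  linarith

theorem norm_sum_toCircle_nsmul_le_div (θ : UnitAddCircle) {n N : ℕ} (hn : n ≤ N) :
    ‖∑ y ∈ range n, (toCircle (y • θ) : ℂ)‖ ≤ 2 * (N / (1 + N * ‖θ‖)) := by
  rw [← mul_div_assoc, le_div_iff₀ (by positivity)]
  have hN : ‖∑ y ∈ range n, (toCircle (y • θ) : ℂ)‖ ≤ N :=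
    (norm_sum_toCircle_nsmul_le θ n).trans (mod_cast hn)
  have hθ := mul_le_mul_of_nonneg_left (norm_sum_toCircle_nsmul_mul_norm_le θ n) N.cast_nonneg
  linarith [N.cast_nonneg (α := ℝ)]

/-! ### Weyl differencing -/

theorem sq_norm_sum_range (f : ℕ → ℂ) (N : ℕ) :
    ‖∑ x ∈ range N, f x‖ ^ 2 = ∑ x ∈ range N, ‖f x‖ ^ 2 +
      2 * (∑ j ∈ range N, ∑ i ∈ range j, f j * starRingEnd ℂ (f i)).re := by
  induction N with
  | zero => simp
  | succ N ih =>
    rw [sum_range_succ_comm f, Complex.sq_norm, Complex.normSq_add, ← Complex.sq_norm,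
      ← Complex.sq_norm, ih, sum_range_succ _ N, sum_range_succ _ N, Complex.add_re, map_sum,
      mul_sum]
    ring

theorem sum_range_sum_range_eq_sum_Ico {M : Type*} [AddCommMonoid M] (c : ℕ → ℕ → M) (N : ℕ) :
    ∑ j ∈ range N, ∑ i ∈ range j, c i j = ∑ h ∈ Ico 1 N, ∑ x ∈ range (N - h), c x (x + h) := by
  rw [sum_sigma', sum_sigma']
  refine sum_bij' (fun p _ ↦ ⟨p.1 - p.2, p.2⟩) (fun p _ ↦ ⟨p.2 + p.1, p.2⟩) ?_ ?_ ?_ ?_ ?_ <;>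
  grind

theorem sq_norm_sum_range_le (f : ℕ → ℂ) (N : ℕ) :
    ‖∑ x ∈ range N, f x‖ ^ 2 ≤ ∑ x ∈ range N, ‖f x‖ ^ 2 +
      2 * ∑ h ∈ Ico 1 N, ‖∑ x ∈ range (N - h), f (x + h) * starRingEnd ℂ (f x)‖ := by
  rw [sq_norm_sum_range,
    sum_range_sum_range_eq_sum_Ico (fun i j ↦ f j * starRingEnd ℂ (f i))]
  gcongr
  exact (Complex.re_le_norm _).trans (norm_sum_le _ _)

/-- The quadratic Weyl sum `∑_{1 ≤ x ≤ N} e(θx²)`. The frequency `θ` lives on `ℝ / ℤ`, where `‖θ‖`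
is the distance to the nearest integer and `e` is `AddCircle.toCircle`. -/
noncomputable def weylSum (N : ℕ) (θ : UnitAddCircle) : ℂ :=
  ∑ x ∈ Icc (1 : ℤ) N, (toCircle (x ^ 2 • θ) : ℂ)

theorem norm_weylSum_le (N : ℕ) (θ : UnitAddCircle) : ‖weylSum N θ‖ ≤ N :=
  (norm_sum_le _ _).trans (by simp [Circle.norm_coe])

theorem weylSum_eq_sum_range (N : ℕ) (θ : UnitAddCircle) :
    weylSum N θ = ∑ x ∈ range N, (toCircle ((x + 1) ^ 2 • θ) : ℂ) := by
  rw [weylSum, Int.Icc_eq_finset_map, sum_map]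
  simp only [add_sub_cancel_right, Int.toNat_natCast, Function.Embedding.trans_apply,
    Nat.castEmbedding_apply, addLeftEmbedding_apply]
  refine sum_congr rfl fun x _ ↦ ?_
  rw [← natCast_zsmul]
  push_cast
  rw [add_comm]

theorem sq_norm_weylSum_le_sum_Ico (N : ℕ) (θ : UnitAddCircle) :
    ‖weylSum N θ‖ ^ 2 ≤ N + 4 * ∑ h ∈ Ico 1 N, N / (1 + N * ‖h • 2 • θ‖) := by
  have differenced (h x : ℕ) : (toCircle ((x + h + 1) ^ 2 • θ) : ℂ) *
      starRingEnd ℂ (toCircle ((x + 1) ^ 2 • θ) : ℂ) =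
        toCircle ((h ^ 2 + 2 * h) • θ) * toCircle (x • h • 2 • θ) := by
    rw [← Circle.coe_inv_eq_conj, ← AddCircle.toCircle_neg, ← Circle.coe_mul, ← Circle.coe_mul,
      ← AddCircle.toCircle_add, ← AddCircle.toCircle_add]
    congr 2
    module
  calc ‖weylSum N θ‖ ^ 2
    _ ≤ N + 2 * ∑ h ∈ Ico 1 N, ‖∑ x ∈ range (N - h), (toCircle (x • h • 2 • θ) : ℂ)‖ := by
      rw [weylSum_eq_sum_range]
      refine (sq_norm_sum_range_le _ N).trans_eq ?_
      simp [differenced, ← mul_sum, Circle.norm_coe]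
    _ ≤ N + 2 * ∑ h ∈ Ico 1 N, 2 * (N / (1 + N * ‖h • 2 • θ‖)) := by
      gcongr
      exact norm_sum_toCircle_nsmul_le_div _ (Nat.sub_le _ _)
    _ = N + 4 * ∑ h ∈ Ico 1 N, N / (1 + N * ‖h • 2 • θ‖) := by
      rw [← mul_sum]
      ring

/-! ### Rational approximation and sums over residues -/

theorem exists_norm_sub_toAddCircle_le (θ : UnitAddCircle) {n : ℕ} (hn : 0 < n) :
    ∃ (q : ℕ) (_ : NeZero q), q ≤ n ∧ ∃ a : (ZMod q)ˣ,
      ‖θ - toAddCircle (a : ZMod q)‖ ≤ 1 / ((n + 1) * q) := by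
  induction θ using QuotientAddGroup.induction_on with
  | H x =>
    obtain ⟨r, hr, hden⟩ := Real.exists_rat_abs_sub_le_and_den_le x hn
    have : NeZero r.den := ⟨r.den_ne_zero⟩
    have unit_num : IsUnit (r.num : ZMod r.den) :=
      (ZMod.coe_int_isUnit_iff_isCoprime _ _).2 (Rat.isCoprime_num_den r).symm
    refine ⟨r.den, inferInstance, hden, unit_num.unit, ?_⟩
    rw [IsUnit.unit_spec, ZMod.toAddCircle_intCast, ← Rat.cast_def]
    exact (QuotientAddGroup.norm_mk_le_norm (S := .zmultiples (1 : ℝ)) (m := x - r)).trans hr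

section ZModSums

variable {n : ℕ} [NeZero n]

theorem one_div_le_norm_toAddCircle {r : ZMod n} (hr : r ≠ 0) : 1 / n ≤ ‖toAddCircle r‖ := by
  have torsion : n • toAddCircle r = 0 := by simp [← map_nsmul]
  have order_le : addOrderOf (toAddCircle r) ≤ n :=
    Nat.le_of_dvd (NeZero.pos n) (addOrderOf_dvd_of_nsmul_eq_zero torsion)
  rw [div_le_iff₀' (by exact_mod_cast NeZero.pos n)]
  calc (1 : ℝ) ≤ addOrderOf (toAddCircle r) • ‖toAddCircle r‖ :=
        AddCircle.le_add_order_smul_norm_of_isOfFinAddOrder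
          (isOfFinAddOrder_iff_nsmul_eq_zero.2 ⟨n, NeZero.pos n, torsion⟩) (by simpa using hr)
    _ ≤ n * ‖toAddCircle r‖ := by rw [nsmul_eq_mul]; gcongr

theorem norm_toAddCircle_le_two_mul_norm {r : ZMod n} (hr : r ≠ 0) {θ : UnitAddCircle}
    (h : ‖θ - toAddCircle r‖ ≤ 1 / (2 * n)) : ‖toAddCircle r‖ ≤ 2 * ‖θ‖ := by
  have spacing := one_div_le_norm_toAddCircle hr
  have triangle := norm_le_norm_add_norm_sub θ (toAddCircle r)
  have : (1 : ℝ) / (2 * n) = 1 / n / 2 := by ring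
  linarith

theorem norm_toAddCircle_natCast {u : ℕ} (hu : u < n) :
    ‖toAddCircle (u : ZMod n)‖ = u / n ∨ ‖toAddCircle (u : ZMod n)‖ = (n - u : ℕ) / n := by
  have := AddCircle.norm_div_natCast (p := 1) (m := u) (n := n)
  rw [mul_one, one_mul, Nat.mod_eq_of_lt hu] at this
  rw [ZMod.toAddCircle_natCast, this]
  rcases min_choice u (n - u) with h | h <;> simp [h]

theorem sum_zmod_eq_sum_range {M : Type*} [AddCommMonoid M] (f : ZMod n → M) :
    ∑ t, f t = ∑ u ∈ range n, f u :=
  sum_nbij' ZMod.val (fun u ↦ (u : ZMod n)) (fun t _ ↦ mem_range.2 t.val_lt) (fun _ _ ↦ mem_univ _)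
    (fun t _ ↦ t.natCast_zmod_val) (fun _ hu ↦ ZMod.val_cast_of_lt (mem_range.1 hu))
    (fun t _ ↦ by rw [t.natCast_zmod_val])

theorem sum_norm_toAddCircle_le {g : ℝ → ℝ} (hg : ∀ x, 0 ≤ x → 0 ≤ g x) :
    ∑ t : ZMod n, g ‖toAddCircle t‖ ≤ g 0 + 2 * ∑ u ∈ range n, g ((u + 1 : ℕ) / n) := by
  have pointwise : ∀ u ∈ range n,
      g ‖toAddCircle (u : ZMod n)‖ ≤ g (u / n) + g ((n - u : ℕ) / n) := by
    intro u hu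
    have hleft := hg (u / n) (by positivity)
    have hright := hg ((n - u : ℕ) / n) (by positivity)
    rcases norm_toAddCircle_natCast (mem_range.1 hu) with h | h <;> rw [h] <;> linarith
  have shift : ∑ u ∈ range n, g (u / n) ≤ g 0 + ∑ u ∈ range n, g ((u + 1 : ℕ) / n) := calc
    ∑ u ∈ range n, g (u / n) ≤ ∑ u ∈ range (n + 1), g (u / n) :=
      sum_le_sum_of_subset_of_nonneg (range_mono n.le_succ) fun _ _ _ ↦ hg _ (by positivity)
    _ = g 0 + ∑ u ∈ range n, g ((u + 1 : ℕ) / n) := by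
      rw [sum_range_succ', add_comm, Nat.cast_zero, zero_div]
  have reflect : ∑ u ∈ range n, g ((n - u : ℕ) / n) = ∑ u ∈ range n, g ((u + 1 : ℕ) / n) := by
    rw [← sum_range_reflect]
    refine sum_congr rfl fun u hu ↦ ?_
    rw [show n - (n - 1 - u) = u + 1 by have := mem_range.1 hu; lia]
  calc ∑ t : ZMod n, g ‖toAddCircle t‖
    _ ≤ ∑ u ∈ range n, (g (u / n) + g ((n - u : ℕ) / n)) := by
      rw [sum_zmod_eq_sum_range]
      exact sum_le_sum pointwise
    _ ≤ g 0 + 2 * ∑ u ∈ range n, g ((u + 1 : ℕ) / n) := by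
      rw [sum_add_distrib, reflect]
      linarith

theorem sum_inv_norm_toAddCircle_le :
    ∑ r : ZMod n, ‖toAddCircle r‖⁻¹ ≤ 2 * (n * (1 + Real.log n)) := calc
  ∑ r : ZMod n, ‖toAddCircle r‖⁻¹
  -- The term at `r = 0` vanishes because `0⁻¹ = 0`.
  _ ≤ 0⁻¹ + 2 * ∑ u ∈ range n, (((u + 1 : ℕ) : ℝ) / n)⁻¹ :=
    sum_norm_toAddCircle_le (g := (·⁻¹)) fun _ ↦ inv_nonneg.2
  _ = (2 : ℝ) * (n * harmonic n) := by simp [harmonic, mul_sum, div_eq_mul_inv]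
  _ ≤ 2 * (n * (1 + Real.log n)) := by gcongr; exact harmonic_le_one_add_log n

theorem sum_range_zmod_le {f : ZMod n → ℝ} (hf : ∀ r, 0 ≤ f r) (N : ℕ) :
    ∑ h ∈ range N, f h ≤ (N / n + 1 : ℕ) * ∑ r, f r := by
  have periods (m : ℕ) : ∑ h ∈ range (m * n), f h = m * ∑ r, f r := by
    induction m with
    | zero => simp
    | succ m ih =>
      rw [add_one_mul, sum_range_add, ih, sum_zmod_eq_sum_range]
      simp [add_one_mul]
  rw [← periods]
  refine sum_le_sum_of_subset_of_nonneg (range_mono ?_) fun _ _ _ ↦ hf _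
  exact (Nat.lt_div_mul_add (NeZero.pos n)).le.trans_eq (by ring)

end ZModSums

/-! ### The pointwise bound for Weyl sums -/

theorem div_one_add_norm_nsmul_le {q N h : ℕ} [NeZero q] (hN : h ≤ N) (hq : (h : ZMod q) ≠ 0)
    {a : (ZMod q)ˣ} {φ : UnitAddCircle}
    (hφ : N * ‖φ - toAddCircle (a : ZMod q)‖ ≤ 1 / (2 * q)) :
    N / (1 + N * ‖h • φ‖) ≤ 2 * ‖toAddCircle (h * a : ZMod q)‖⁻¹ := by
  have ne_zero : (h * a : ZMod q) ≠ 0 := by simpa using hq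
  have close : ‖h • φ - toAddCircle (h * a : ZMod q)‖ ≤ 1 / (2 * q) := calc
    ‖h • φ - toAddCircle (h * a : ZMod q)‖ = ‖h • (φ - toAddCircle (a : ZMod q))‖ := by
      rw [← nsmul_eq_mul, map_nsmul, smul_sub]
    _ ≤ h * ‖φ - toAddCircle (a : ZMod q)‖ := norm_nsmul_le
    _ ≤ N * ‖φ - toAddCircle (a : ZMod q)‖ := by gcongr
    _ ≤ 1 / (2 * q) := hφ
  have norm_le := norm_toAddCircle_le_two_mul_norm ne_zero close
  have norm_pos : 0 < ‖toAddCircle (h * a : ZMod q)‖ := by simpa using ne_zero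
  rw [← div_eq_mul_inv, div_le_div_iff₀ (by positivity) norm_pos]
  linarith [mul_le_mul_of_nonneg_left norm_le N.cast_nonneg]

theorem sum_div_one_add_norm_nsmul_le_of_not_dvd {q N : ℕ} [NeZero q] {a : (ZMod q)ˣ}
    {φ : UnitAddCircle} (hφ : N * ‖φ - toAddCircle (a : ZMod q)‖ ≤ 1 / (2 * q)) :
    ∑ h ∈ Ico 1 N with ¬q ∣ h, N / (1 + N * ‖h • φ‖) ≤ 4 * ((N + q) * (1 + Real.log q)) := calc
  ∑ h ∈ Ico 1 N with ¬q ∣ h, N / (1 + N * ‖h • φ‖)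
  _ ≤ ∑ h ∈ Ico 1 N with ¬q ∣ h, 2 * ‖toAddCircle (h * a : ZMod q)‖⁻¹ := by
    refine sum_le_sum fun h hh ↦ ?_
    obtain ⟨hN, hq⟩ := mem_filter.1 hh
    exact div_one_add_norm_nsmul_le (mem_Ico.1 hN).2.le
      (mt (ZMod.natCast_eq_zero_iff h q).1 hq) hφ
  _ ≤ ∑ h ∈ range N, 2 * ‖toAddCircle (h * a : ZMod q)‖⁻¹ :=
    sum_le_sum_of_subset_of_nonneg (fun h hh ↦ by grind) fun _ _ _ ↦ by positivity
  _ ≤ (N / q + 1 : ℕ) * ∑ r : ZMod q, 2 * ‖toAddCircle (r * a : ZMod q)‖⁻¹ :=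
    sum_range_zmod_le (f := fun r ↦ 2 * ‖toAddCircle (r * (a : ZMod q))‖⁻¹)
      (fun _ ↦ by positivity) N
  _ = 2 * ((N / q + 1 : ℕ) * ∑ r : ZMod q, ‖toAddCircle r‖⁻¹) := by
    rw [← mul_sum, ← Equiv.sum_comp a.mulRight fun r : ZMod q ↦ ‖toAddCircle r‖⁻¹,
      mul_left_comm]
    simp only [Units.mulRight_apply]
  _ ≤ 2 * ((N / q + 1) * (2 * (q * (1 + Real.log q)))) := by
    push_cast
    gcongr
    · exact Nat.cast_div_le
    · exact sum_inv_norm_toAddCircle_le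
  _ = 4 * ((N + q) * (1 + Real.log q)) := by
    have : (q : ℝ) ≠ 0 := NeZero.ne _
    field_simp
    ring

theorem sum_one_div_sqrt_le (K : ℕ) : ∑ k ∈ range K, 1 / √(k + 1) ≤ 2 * √K := by
  induction K with
  | zero => simp
  | succ K ih =>
    have step : 1 / √(K + 1) ≤ 2 * (√(K + 1) - √K) := by
      rw [div_le_iff₀ (by positivity)]
      nlinarith [Real.sq_sqrt (x := (K : ℝ)) (by positivity),
        Real.sq_sqrt (x := (K : ℝ) + 1) (by positivity), sq_nonneg (√(K + 1) - √K)]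
    rw [sum_range_succ]
    push_cast
    linarith

theorem sum_div_one_add_norm_nsmul_le {K N : ℕ} (hK : K ≤ N) {ψ : UnitAddCircle}
    (hψ : N * ‖ψ‖ ≤ 1 / 2) :
    ∑ k ∈ range K, N / (1 + N * ‖(k + 1) • ψ‖) ≤ 2 * N * √(N * K / (1 + N ^ 2 * ‖ψ‖)) := by
  have term_le : ∀ k ∈ range K, N / (1 + N * ‖(k + 1) • ψ‖) ≤
      N * √(N / (1 + N ^ 2 * ‖ψ‖)) * (1 / √(k + 1)) := by
    intro k hk
    have succ_le : ((k + 1 : ℕ) : ℝ) ≤ N := by exact_mod_cast (mem_range.1 hk).trans_le hK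
    have norm_eq : ‖(k + 1) • ψ‖ = (k + 1 : ℕ) * ‖ψ‖ :=
      norm_nsmul_of_mul_norm_le_half <| le_trans (by gcongr) hψ
    rw [norm_eq, mul_assoc, mul_one_div, ← Real.sqrt_div' _ (by positivity), div_eq_mul_inv]
    gcongr
    have N_pos : (0 : ℝ) < N := lt_of_lt_of_le (by positivity) succ_le
    refine Real.le_sqrt_of_sq_le ?_
    rw [div_div, inv_pow, inv_le_comm₀ (by positivity) (by positivity), inv_div,
      div_le_iff₀ (by positivity)]
    push_cast at succ_le ⊢
    calc (1 + N ^ 2 * ‖ψ‖) * (k + 1)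
      _ ≤ (1 + N * ((k + 1) * ‖ψ‖)) * N := by linarith
      _ ≤ (1 + N * ((k + 1) * ‖ψ‖)) ^ 2 * N := by
        gcongr
        exact le_self_pow₀ (le_add_of_nonneg_right (by positivity)) two_ne_zero
  calc ∑ k ∈ range K, N / (1 + N * ‖(k + 1) • ψ‖)
    _ ≤ N * √(N / (1 + N ^ 2 * ‖ψ‖)) * ∑ k ∈ range K, 1 / √(k + 1) := by
      rw [mul_sum]
      exact sum_le_sum term_le
    _ ≤ N * √(N / (1 + N ^ 2 * ‖ψ‖)) * (2 * √K) := by gcongr; exact sum_one_div_sqrt_le K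
    _ = 2 * N * √(N * K / (1 + N ^ 2 * ‖ψ‖)) := by
      rw [mul_div_right_comm, Real.sqrt_mul (by positivity)]
      ring

theorem filter_dvd_Ico_subset_image {q : ℕ} (hq : 0 < q) (N : ℕ) :
    {h ∈ Ico 1 N | q ∣ h} ⊆ (range (N / q)).image (fun k ↦ (k + 1) * q) := by
  intro h hh
  obtain ⟨hN, k, rfl⟩ := mem_filter.1 hh
  obtain ⟨hpos, hlt⟩ := mem_Ico.1 hN
  have k_pos : 0 < k := Nat.pos_of_mul_pos_left hpos
  have k_le : k ≤ N / q := (Nat.le_div_iff_mul_le hq).2 (mul_comm q k ▸ hlt.le)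
  exact mem_image.2 ⟨k - 1, mem_range.2 (by lia), by rw [Nat.sub_add_cancel k_pos, mul_comm]⟩

theorem sum_div_one_add_norm_nsmul_le_of_dvd {q N : ℕ} (hq : 0 < q) {φ : UnitAddCircle}
    (hφ : N * ‖q • φ‖ ≤ 1 / 2) :
    ∑ h ∈ Ico 1 N with q ∣ h, N / (1 + N * ‖h • φ‖) ≤
      2 * (N ^ 2 / √(q * (1 + N ^ 2 * ‖q • φ‖))) := calc
  ∑ h ∈ Ico 1 N with q ∣ h, N / (1 + N * ‖h • φ‖)
  _ ≤ ∑ k ∈ range (N / q), N / (1 + N * ‖(k + 1) • q • φ‖) := by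
    refine (sum_le_sum_of_subset_of_nonneg (filter_dvd_Ico_subset_image hq N)
      fun _ _ _ ↦ by positivity).trans_eq ?_
    rw [sum_image fun k _ l _ h ↦ by simpa [hq.ne'] using h]
    simp only [mul_smul]
  _ ≤ 2 * N * √(N * (N / q : ℕ) / (1 + N ^ 2 * ‖q • φ‖)) :=
    sum_div_one_add_norm_nsmul_le (Nat.div_le_self _ _) hφ
  _ ≤ 2 * N * √(N * (N / q) / (1 + N ^ 2 * ‖q • φ‖)) := by gcongr; exact Nat.cast_div_le
  _ = 2 * (N ^ 2 / √(q * (1 + N ^ 2 * ‖q • φ‖))) := by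
    rw [← mul_div_assoc, div_div, ← sq, Real.sqrt_div (by positivity),
      Real.sqrt_sq (by positivity)]
    ring

theorem exists_sq_norm_weylSum_le {N : ℕ} (hN : 0 < N) (θ : UnitAddCircle) :
    ∃ q : ℕ, 0 < q ∧ q ≤ 2 * N ∧ ‖weylSum N θ‖ ^ 2 ≤ 49 * (N * (1 + Real.log (2 * N))) +
      8 * (N ^ 2 / √(q * (1 + N ^ 2 * ‖q • 2 • θ‖))) := by
  obtain ⟨q, _, hqN, a, ha⟩ := exists_norm_sub_toAddCircle_le (2 • θ) (n := 2 * N) (by lia)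
  have hq : (1 : ℝ) ≤ q := by exact_mod_cast NeZero.one_le
  have hqN' : (q : ℝ) ≤ 2 * N := by exact_mod_cast hqN
  have close : N * ‖2 • θ - toAddCircle (a : ZMod q)‖ ≤ 1 / (2 * q) := by
    refine (mul_le_mul_of_nonneg_left ha N.cast_nonneg).trans ?_
    rw [mul_one_div, div_le_div_iff₀ (by positivity) (by positivity)]
    push_cast
    linarith
  have close_zero : N * ‖q • 2 • θ‖ ≤ 1 / 2 := calc
    N * ‖q • 2 • θ‖ = N * ‖q • (2 • θ - toAddCircle (a : ZMod q))‖ := by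
      rw [smul_sub, ← map_nsmul]; simp
    _ ≤ N * (q * ‖2 • θ - toAddCircle (a : ZMod q)‖) := by gcongr; exact norm_nsmul_le
    _ ≤ q * (1 / (2 * q)) := by rw [mul_left_comm]; gcongr
    _ = 1 / 2 := by field_simp
  have non_multiples : ∑ h ∈ Ico 1 N with ¬q ∣ h, N / (1 + N * ‖h • 2 • θ‖) ≤
      12 * (N * (1 + Real.log (2 * N))) := calc
    _ ≤ 4 * ((N + q) * (1 + Real.log q)) := sum_div_one_add_norm_nsmul_le_of_not_dvd close
    _ ≤ 4 * ((N + 2 * N) * (1 + Real.log (2 * N))) := by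
      have := Real.log_nonneg hq
      gcongr
    _ = 12 * (N * (1 + Real.log (2 * N))) := by ring
  have log_nonneg : 0 ≤ N * Real.log (2 * N) :=
    mul_nonneg N.cast_nonneg (Real.log_nonneg (hq.trans hqN'))
  refine ⟨q, NeZero.pos q, hqN, (sq_norm_weylSum_le_sum_Ico N θ).trans ?_⟩
  rw [← sum_filter_add_sum_filter_not _ (q ∣ ·)]
  linarith [sum_div_one_add_norm_nsmul_le_of_dvd (NeZero.pos q) close_zero]

/-! ### The fifth moment over residues modulo a prime -/

section Decay

variable {σ : ℝ}

theorem sum_one_add_div_rpow_neg_le (hσ : 1 < σ) {X : ℝ} (hX : 0 < X) (n : ℕ) :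
    ∑ u ∈ range n, (1 + (u + 1 : ℕ) / X) ^ (-σ) ≤ X / (σ - 1) := by
  have antitone : AntitoneOn (fun x : ℝ ↦ (1 + x / X) ^ (-σ)) (Set.Icc 0 (0 + n)) := by
    intro x hx y _ hxy
    have : 0 < 1 + x / X := by have := hx.1; positivity
    exact Real.rpow_le_rpow_of_nonpos this (by gcongr) (by linarith)
  have zero_notMem : (0 : ℝ) ∉ Set.uIcc 1 (1 + n / X) := by
    rw [Set.uIcc_of_le (le_add_of_nonneg_right (by positivity))]
    exact fun h ↦ absurd h.1 (by norm_num)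
  calc ∑ u ∈ range n, (1 + (u + 1 : ℕ) / X) ^ (-σ)
    _ ≤ ∫ x in (0 : ℝ)..n, (1 + x / X) ^ (-σ) := by simpa using antitone.sum_le_integral
    _ = X * ∫ x in (1 : ℝ)..(1 + n / X), x ^ (-σ) := by
      rw [intervalIntegral.integral_comp_add_div (fun x : ℝ ↦ x ^ (-σ)) hX.ne']
      simp
    _ = X / (σ - 1) * (1 - (1 + n / X) ^ (1 - σ)) := by
      rw [integral_rpow (Or.inr ⟨by linarith, zero_notMem⟩), Real.one_rpow,
        neg_add_eq_sub, ← neg_sub σ 1, div_neg]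
      ring
    _ ≤ X / (σ - 1) := by
      have : 0 < σ - 1 := by linarith
      have : 0 ≤ (1 + n / X) ^ (1 - σ) := by positivity
      exact mul_le_of_le_one_right (by positivity) (by linarith)

theorem sum_one_add_mul_norm_toAddCircle_rpow_neg_le (hσ : 1 < σ) {Y : ℝ} (hY : 0 < Y) (n : ℕ)
    [NeZero n] :
    ∑ t : ZMod n, (1 + Y * ‖toAddCircle t‖) ^ (-σ) ≤ 1 + 2 / (σ - 1) * (n / Y) := calc
  ∑ t : ZMod n, (1 + Y * ‖toAddCircle t‖) ^ (-σ)
  _ ≤ (1 + Y * 0) ^ (-σ) + 2 * ∑ u ∈ range n, (1 + Y * ((u + 1 : ℕ) / n)) ^ (-σ) :=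
    sum_norm_toAddCircle_le (g := fun x ↦ (1 + Y * x) ^ (-σ)) fun _ _ ↦ by positivity
  _ = 1 + 2 * ∑ u ∈ range n, (1 + (u + 1 : ℕ) / (n / Y)) ^ (-σ) := by
    rw [mul_zero, add_zero, Real.one_rpow]
    simp only [div_div_eq_mul_div, mul_div_right_comm, mul_comm Y]
  _ ≤ 1 + 2 * (n / Y / (σ - 1)) := by
    have : (0 : ℝ) < n := by exact_mod_cast NeZero.pos n
    gcongr
    exact sum_one_add_div_rpow_neg_le hσ (by positivity) n
  _ = 1 + 2 / (σ - 1) * (n / Y) := by ring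

end Decay

theorem one_add_log_two_mul_le {x : ℝ} (hx : 1 ≤ x) :
    1 + Real.log (2 * x) ≤ 11 * x ^ (1 / 5 : ℝ) := by
  have one_le : 1 ≤ x ^ (1 / 5 : ℝ) := Real.one_le_rpow hx (by norm_num)
  have two_rpow_le : (2 : ℝ) ^ (1 / 5 : ℝ) ≤ 2 :=
    (Real.rpow_le_rpow_of_exponent_le one_le_two (by norm_num)).trans_eq (Real.rpow_one 2)
  have log_le : Real.log (2 * x) ≤ 5 * (2 ^ (1 / 5 : ℝ) * x ^ (1 / 5 : ℝ)) := by
    have := Real.log_le_rpow_div (x := 2 * x) (ε := 1 / 5) (by positivity) (by norm_num)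
    rw [Real.mul_rpow zero_le_two (by positivity)] at this
    linarith
  nlinarith

theorem add_rpow_le_mul_rpow_add_rpow {x y p : ℝ} (hx : 0 ≤ x) (hy : 0 ≤ y) (hp : 1 ≤ p) :
    (x + y) ^ p ≤ 2 ^ (p - 1) * (x ^ p + y ^ p) := by
  lift x to NNReal using hx
  lift y to NNReal using hy
  exact_mod_cast NNReal.rpow_add_le_mul_rpow_add_rpow x y hp

theorem sq_rpow_five_halves {x : ℝ} (hx : 0 ≤ x) : (x ^ 2) ^ (5 / 2 : ℝ) = x ^ 5 := by
  rw [← Real.rpow_natCast, ← Real.rpow_natCast, ← Real.rpow_mul hx]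
  norm_num

theorem exists_pow_five_norm_weylSum_le :
    ∃ C : ℝ, 0 < C ∧ ∀ N : ℕ, 0 < N → ∀ θ : UnitAddCircle, ∃ q ∈ Icc 1 (2 * N),
      ‖weylSum N θ‖ ^ 5 ≤
        C * (N ^ 3 + N ^ 5 * (q * (1 + N ^ 2 * ‖q • 2 • θ‖)) ^ (-(5 / 4) : ℝ)) := by
  refine ⟨539 ^ (5 / 2 : ℝ) * 2 ^ (5 / 2 - 1 : ℝ), by positivity, fun N hN θ ↦ ?_⟩
  obtain ⟨q, hq, hqN, hW⟩ := exists_sq_norm_weylSum_le hN θ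
  refine ⟨q, mem_Icc.2 ⟨hq, hqN⟩, ?_⟩
  set Z := q * (1 + N ^ 2 * ‖q • 2 • θ‖)
  have minor_rpow : (N * N ^ (1 / 5 : ℝ)) ^ (5 / 2 : ℝ) = (N : ℝ) ^ 3 := by
    rw [← Real.rpow_one_add' (by positivity) (by norm_num), ← Real.rpow_mul (by positivity),
      ← Real.rpow_natCast]
    norm_num
  have major_rpow : (N ^ 2 / √Z) ^ (5 / 2 : ℝ) = N ^ 5 * Z ^ (-(5 / 4) : ℝ) := by
    rw [Real.div_rpow (by positivity) (by positivity), sq_rpow_five_halves (by positivity),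
      Real.sqrt_eq_rpow, ← Real.rpow_mul (by positivity), Real.rpow_neg (by positivity),
      div_eq_mul_inv]
    norm_num
  have sq_le : ‖weylSum N θ‖ ^ 2 ≤ 539 * (N * N ^ (1 / 5 : ℝ) + N ^ 2 / √Z) := by
    have log_le := mul_le_mul_of_nonneg_left
      (one_add_log_two_mul_le (x := N) (mod_cast hN)) N.cast_nonneg
    have : 0 ≤ N ^ 2 / √Z := by positivity
    linarith
  calc ‖weylSum N θ‖ ^ 5 = (‖weylSum N θ‖ ^ 2) ^ (5 / 2 : ℝ) :=
        (sq_rpow_five_halves (norm_nonneg _)).symm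
    _ ≤ (539 * (N * N ^ (1 / 5 : ℝ) + N ^ 2 / √Z)) ^ (5 / 2 : ℝ) := by gcongr
    _ = 539 ^ (5 / 2 : ℝ) * (N * N ^ (1 / 5 : ℝ) + N ^ 2 / √Z) ^ (5 / 2 : ℝ) :=
        Real.mul_rpow (by positivity) (by positivity)
    _ ≤ 539 ^ (5 / 2 : ℝ) * (2 ^ (5 / 2 - 1 : ℝ) * (N ^ 3 + N ^ 5 * Z ^ (-(5 / 4) : ℝ))) := by
        rw [← minor_rpow, ← major_rpow]
        gcongr
        exact add_rpow_le_mul_rpow_add_rpow (by positivity) (by positivity) (by norm_num)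
    _ = 539 ^ (5 / 2 : ℝ) * 2 ^ (5 / 2 - 1 : ℝ) * (N ^ 3 + N ^ 5 * Z ^ (-(5 / 4) : ℝ)) := by ring

theorem exists_pow_five_norm_weylSum_le_sum :
    ∃ C : ℝ, 0 < C ∧ ∀ N : ℕ, 0 < N → ∀ θ : UnitAddCircle,
      ‖weylSum N θ‖ ^ 5 ≤ C * (N ^ 3 + N ^ 5 * ∑ q ∈ Icc 1 (2 * N),
        (q : ℝ) ^ (-(5 / 4) : ℝ) * (1 + N ^ 2 * ‖(q * 2) • θ‖) ^ (-(5 / 4) : ℝ)) := by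
  obtain ⟨C, hC, norm_le⟩ := exists_pow_five_norm_weylSum_le
  refine ⟨C, hC, fun N hN θ ↦ ?_⟩
  obtain ⟨q, hq, norm_le_term⟩ := norm_le N hN θ
  refine norm_le_term.trans ?_
  gcongr
  rw [Real.mul_rpow (by positivity) (by positivity), ← mul_smul]
  exact single_le_sum (f := fun q : ℕ ↦
    (q : ℝ) ^ (-(5 / 4) : ℝ) * (1 + N ^ 2 * ‖(q * 2) • θ‖) ^ (-(5 / 4) : ℝ))
    (fun _ _ ↦ by positivity) hq

theorem sum_comp_nsmul_toAddCircle {P k : ℕ} [Fact P.Prime] (hk : (k : ZMod P) ≠ 0)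
    (g : UnitAddCircle → ℝ) :
    ∑ t : ZMod P, g (k • toAddCircle t) = ∑ t : ZMod P, g (toAddCircle t) := by
  rw [← Equiv.sum_comp (Equiv.mulLeft₀ (k : ZMod P) hk) fun t ↦ g (toAddCircle t)]
  simp only [Equiv.mulLeft₀_apply, ← nsmul_eq_mul, map_nsmul]

theorem sum_one_add_mul_norm_nsmul_rpow_le {N P k : ℕ} [Fact P.Prime] (hN : 0 < N)
    (hNP : N ^ 2 ≤ P) (hk : (k : ZMod P) ≠ 0) :
    ∑ t : ZMod P, (1 + N ^ 2 * ‖k • toAddCircle t‖) ^ (-(5 / 4) : ℝ) ≤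
      9 * ((P : ℝ) / N ^ 2) := by
  have decay_sum := sum_one_add_mul_norm_toAddCircle_rpow_neg_le (σ := 5 / 4) (by norm_num)
    (Y := N ^ 2) (by positivity) P
  have one_le : 1 ≤ (P : ℝ) / N ^ 2 := by
    rw [one_le_div (by positivity)]
    exact_mod_cast hNP
  rw [sum_comp_nsmul_toAddCircle hk fun θ ↦ (1 + N ^ 2 * ‖θ‖) ^ (-(5 / 4) : ℝ)]
  linarith

theorem exists_sum_pow_five_norm_weylSum_le :
    ∃ C : ℝ, 0 < C ∧ ∀ (N P : ℕ) [Fact P.Prime], 0 < N → 4 * N < P → N ^ 2 ≤ P →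
      ∑ t : ZMod P, ‖weylSum N (toAddCircle t)‖ ^ 5 ≤ C * (P * N ^ 3) := by
  obtain ⟨A, hA, norm_le⟩ := exists_pow_five_norm_weylSum_le_sum
  set ζ : ℝ := ∑' q : ℕ, (q : ℝ) ^ (-(5 / 4) : ℝ)
  have ζ_nonneg : 0 ≤ ζ := tsum_nonneg fun _ ↦ by positivity
  refine ⟨A * (1 + ζ * 9), by positivity, fun N P _ hN hP hNP ↦ ?_⟩
  let major (q : ℕ) (t : ZMod P) : ℝ := (1 + N ^ 2 * ‖(q * 2) • toAddCircle t‖) ^ (-(5 / 4) : ℝ)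
  have sum_major_le : ∀ q ∈ Icc 1 (2 * N), ∑ t : ZMod P, major q t ≤ 9 * (P / N ^ 2) := by
    refine fun q hq ↦ sum_one_add_mul_norm_nsmul_rpow_le hN hNP fun h ↦ ?_
    have := Nat.le_of_dvd (by grind) ((ZMod.natCast_eq_zero_iff _ _).1 h)
    grind
  calc ∑ t : ZMod P, ‖weylSum N (toAddCircle t)‖ ^ 5
    _ ≤ ∑ t : ZMod P, A * (N ^ 3 + N ^ 5 *
          ∑ q ∈ Icc 1 (2 * N), (q : ℝ) ^ (-(5 / 4) : ℝ) * major q t) :=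
      sum_le_sum fun t _ ↦ norm_le N hN _
    _ = A * (P * N ^ 3 + N ^ 5 *
          ∑ q ∈ Icc 1 (2 * N), (q : ℝ) ^ (-(5 / 4) : ℝ) * ∑ t : ZMod P, major q t) := by
      rw [← mul_sum, sum_add_distrib, ← mul_sum, sum_comm]
      simp only [← mul_sum, sum_const, card_univ, ZMod.card, nsmul_eq_mul]
    _ ≤ A * (P * N ^ 3 + N ^ 5 *
          ∑ q ∈ Icc 1 (2 * N), (q : ℝ) ^ (-(5 / 4) : ℝ) * (9 * (P / N ^ 2))) := by
      gcongr with q hq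
      exact sum_major_le q hq
    _ ≤ A * (P * N ^ 3 + N ^ 5 * (ζ * (9 * (P / N ^ 2)))) := by
      rw [← sum_mul]
      gcongr
      exact (Real.summable_nat_rpow.2 (by norm_num)).sum_le_tsum _ fun _ _ ↦ by positivity
    _ = A * (1 + ζ * 9) * (P * N ^ 3) := by field_simp

/-! ### Counting solutions -/

theorem addChar_map_sum {ι A M : Type*} [AddCommMonoid A] [CommMonoid M] (ψ : AddChar A M)
    (s : Finset ι) (f : ι → A) : ψ (∑ i ∈ s, f i) = ∏ i ∈ s, ψ (f i) :=
  map_prod ψ.toMonoidHom (fun i ↦ Multiplicative.ofAdd (f i)) s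

theorem card_filter_sum_eq_mul_le {ι κ : Type*} [Fintype ι] [DecidableEq ι] {n : ℕ} [NeZero n]
    (A : ι → Finset κ) (f : ι → κ → ZMod n) (m : ZMod n) :
    n * #{x ∈ Fintype.piFinset A | ∑ i, f i (x i) = m} ≤
      ∑ t : ZMod n, ∏ i, ‖∑ y ∈ A i, ZMod.stdAddChar (t * f i y)‖ := by
  have detect (x : ι → κ) : ∑ t : ZMod n, ZMod.stdAddChar (t * (∑ i, f i (x i) - m)) =
      if ∑ i, f i (x i) = m then (n : ℂ) else 0 := by
    rw [AddChar.sum_mulShift _ (ZMod.isPrimitive_stdAddChar n)]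
    simp [sub_eq_zero]
  have expand (t : ZMod n) :
      ∑ x ∈ Fintype.piFinset A, ZMod.stdAddChar (t * (∑ i, f i (x i) - m)) =
        ZMod.stdAddChar (-(t * m)) * ∏ i, ∑ y ∈ A i, ZMod.stdAddChar (t * f i y) := by
    rw [prod_univ_sum, mul_sum]
    refine sum_congr rfl fun x _ ↦ ?_
    rw [mul_sub, sub_eq_neg_add, AddChar.map_add_eq_mul, mul_sum, addChar_map_sum]
  have identity : (n * #{x ∈ Fintype.piFinset A | ∑ i, f i (x i) = m} : ℂ) =
      ∑ t : ZMod n, ZMod.stdAddChar (-(t * m)) *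
        ∏ i, ∑ y ∈ A i, ZMod.stdAddChar (t * f i y) := by
    simp_rw [← expand]
    rw [sum_comm]
    simp_rw [detect]
    rw [sum_ite]
    simp [mul_comm]
  calc (n * #{x ∈ Fintype.piFinset A | ∑ i, f i (x i) = m} : ℝ)
    _ = ‖(n * #{x ∈ Fintype.piFinset A | ∑ i, f i (x i) = m} : ℂ)‖ := by simp
    _ ≤ ∑ t : ZMod n, ∏ i, ‖∑ y ∈ A i, ZMod.stdAddChar (t * f i y)‖ := by
      rw [identity]
      refine (norm_sum_le _ _).trans_eq (sum_congr rfl fun t _ ↦ ?_)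
      rw [norm_mul, AddChar.norm_apply, one_mul, norm_prod]

theorem prod_le_sum_pow_card {ι : Type*} {s : Finset ι} (hs : s.Nonempty) {f : ι → ℝ}
    (hf : ∀ i ∈ s, 0 ≤ f i) : ∏ i ∈ s, f i ≤ ∑ i ∈ s, f i ^ #s := by
  obtain ⟨j, hj, hmax⟩ := s.exists_max_image f hs
  calc ∏ i ∈ s, f i ≤ ∏ _i ∈ s, f j := prod_le_prod hf hmax
    _ = f j ^ #s := prod_const _
    _ ≤ ∑ i ∈ s, f i ^ #s :=
      single_le_sum (f := fun i ↦ f i ^ #s) (fun i hi ↦ pow_nonneg (hf i hi) _) hj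

theorem prod_norm_weylSum_le {ι : Type*} [Fintype ι] {T : Finset ι}
    (hT : T.Nonempty) (N : ℕ) (θ : ι → UnitAddCircle) :
    ∏ i, ‖weylSum N (θ i)‖ ≤ N ^ (Fintype.card ι - #T) * ∑ i ∈ T, ‖weylSum N (θ i)‖ ^ #T := by
  classical
  calc ∏ i, ‖weylSum N (θ i)‖
    _ = (∏ i ∈ Tᶜ, ‖weylSum N (θ i)‖) * ∏ i ∈ T, ‖weylSum N (θ i)‖ :=
      (prod_compl_mul_prod T _).symm
    _ ≤ N ^ #Tᶜ * ∑ i ∈ T, ‖weylSum N (θ i)‖ ^ #T := by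
      gcongr
      · exact (prod_le_prod (fun _ _ ↦ norm_nonneg _) fun _ _ ↦ norm_weylSum_le _ _).trans_eq
          (prod_const _)
      · exact prod_le_sum_pow_card hT fun _ _ ↦ norm_nonneg _
    _ = N ^ (Fintype.card ι - #T) * ∑ i ∈ T, ‖weylSum N (θ i)‖ ^ #T := by rw [card_compl]

theorem sum_prod_norm_weylSum_le {ι : Type*} [Fintype ι] {P : ℕ} [Fact P.Prime]
    {a : ι → ZMod P} {T : Finset ι} (hT : T.Nonempty) (ha : ∀ i ∈ T, a i ≠ 0) (N : ℕ) :
    ∑ t : ZMod P, ∏ i, ‖weylSum N (toAddCircle (t * a i))‖ ≤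
      N ^ (Fintype.card ι - #T) * (#T * ∑ t : ZMod P, ‖weylSum N (toAddCircle t)‖ ^ #T) := calc
  ∑ t : ZMod P, ∏ i, ‖weylSum N (toAddCircle (t * a i))‖
  _ ≤ ∑ t : ZMod P, N ^ (Fintype.card ι - #T) *
        ∑ i ∈ T, ‖weylSum N (toAddCircle (t * a i))‖ ^ #T :=
    sum_le_sum fun _ _ ↦ prod_norm_weylSum_le hT N _
  _ = N ^ (Fintype.card ι - #T) *
        ∑ i ∈ T, ∑ t : ZMod P, ‖weylSum N (toAddCircle (t * a i))‖ ^ #T := by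
    rw [← mul_sum, sum_comm]
  _ = N ^ (Fintype.card ι - #T) * (#T * ∑ t : ZMod P, ‖weylSum N (toAddCircle t)‖ ^ #T) := by
    rw [← nsmul_eq_mul (#T), ← sum_const]
    congr! 2 with i hi
    exact Equiv.sum_comp (Equiv.mulRight₀ (a i) (ha i hi))
      fun t ↦ ‖weylSum N (toAddCircle t)‖ ^ #T

theorem sum_stdAddChar_mul_sq_eq_weylSum {n : ℕ} [NeZero n] (t a : ZMod n) (N : ℕ) :
    ∑ x ∈ Icc (1 : ℤ) N, ZMod.stdAddChar (t * (a * (x : ZMod n) ^ 2)) =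
      weylSum N (toAddCircle (t * a)) := by
  refine sum_congr rfl fun x _ ↦ ?_
  have stdAddChar_eq (j : ZMod n) : ZMod.stdAddChar j = (toCircle (toAddCircle j) : ℂ) := rfl
  rw [stdAddChar_eq, ← map_zsmul, zsmul_eq_mul, Int.cast_pow]
  ring_nf

theorem card_diagonal_solutions_mul_le_sum_prod {ι : Type*} [Fintype ι] [DecidableEq ι] (n : ℕ)
    [NeZero n] (a : ι → ℤ) (m : ℤ) (N : ℕ) :
    n * #{x ∈ Fintype.piFinset fun _ : ι ↦ Icc (1 : ℤ) N | ∑ i, a i * x i ^ 2 = m} ≤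
      ∑ t : ZMod n, ∏ i, ‖weylSum N (toAddCircle (t * (a i : ZMod n)))‖ := calc
  (n * #{x ∈ Fintype.piFinset fun _ : ι ↦ Icc (1 : ℤ) N | ∑ i, a i * x i ^ 2 = m} : ℝ)
  _ ≤ n * #{x ∈ Fintype.piFinset fun _ : ι ↦ Icc (1 : ℤ) N |
        ∑ i, (a i * (x i : ZMod n) ^ 2 : ZMod n) = m} := by
    refine mul_le_mul_of_nonneg_left (mod_cast card_le_card ?_) n.cast_nonneg
    refine monotone_filter_right _ fun x _ hx ↦ ?_
    simpa using congrArg (Int.cast : ℤ → ZMod n) hx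
  _ ≤ ∑ t : ZMod n, ∏ i, ‖weylSum N (toAddCircle (t * (a i : ZMod n)))‖ := by
    refine (card_filter_sum_eq_mul_le (fun _ : ι ↦ Icc (1 : ℤ) N)
      (fun i x ↦ (a i : ZMod n) * (x : ZMod n) ^ 2) (m : ZMod n)).trans_eq ?_
    refine sum_congr rfl fun t _ ↦ prod_congr rfl fun i _ ↦ ?_
    rw [sum_stdAddChar_mul_sq_eq_weylSum]

theorem exists_prime_gt_forall_intCast_ne_zero {ι : Type*} (T : Finset ι) {a : ι → ℤ}
    (ha : ∀ i ∈ T, a i ≠ 0) (B : ℕ) :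
    ∃ P : ℕ, P.Prime ∧ B < P ∧ ∀ i ∈ T, (a i : ZMod P) ≠ 0 := by
  obtain ⟨P, hP, prime⟩ := Nat.exists_infinite_primes (B + ∑ i ∈ T, (a i).natAbs + 1)
  refine ⟨P, prime, by lia, fun i hi h ↦ ?_⟩
  have dvd : P ∣ (a i).natAbs := Int.natCast_dvd.1 ((ZMod.intCast_zmod_eq_zero_iff_dvd _ _).1 h)
  have := Nat.le_of_dvd (Int.natAbs_pos.2 (ha i hi)) dvd
  have := single_le_sum (f := fun i ↦ (a i).natAbs) (fun _ _ ↦ Nat.zero_le _) hi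
  lia

theorem diagonal_quadric_solution_count_general :
    ∃ C : ℝ, 0 < C ∧ ∀ {ι : Type*} [Fintype ι] [DecidableEq ι] (a : ι → ℤ),
      5 ≤ #{i | a i ≠ 0} → ∀ (m : ℤ) (N : ℕ), 1 ≤ N →
        (#{x ∈ Fintype.piFinset fun _ : ι ↦ Icc (1 : ℤ) N | ∑ i, a i * x i ^ 2 = m} : ℝ) ≤
          C * (N : ℝ) ^ (Fintype.card ι - 2) := by
  obtain ⟨C, hC, fifth_moment⟩ := exists_sum_pow_five_norm_weylSum_le
  refine ⟨5 * C, by positivity, fun {ι} _ _ a ha m N hN ↦ ?_⟩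
  obtain ⟨T, hT, card_T⟩ := exists_subset_card_eq ha
  obtain ⟨P, prime, hP, a_ne_zero⟩ := exists_prime_gt_forall_intCast_ne_zero T
    (fun i hi ↦ (mem_filter.1 (hT hi)).2) (4 * N + N ^ 2)
  have : Fact P.Prime := ⟨prime⟩
  have exponent : Fintype.card ι - 2 = Fintype.card ι - 5 + 3 := by
    have := card_T ▸ card_le_univ T
    lia
  have count := (card_diagonal_solutions_mul_le_sum_prod P a m N).trans
    (sum_prod_norm_weylSum_le (card_pos.1 (by lia)) a_ne_zero N)
  rw [card_T] at count
  refine le_of_mul_le_mul_left (count.trans ?_) (Nat.cast_pos.2 prime.pos)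
  calc (N : ℝ) ^ (Fintype.card ι - 5) * ((5 : ℕ) * ∑ t : ZMod P, ‖weylSum N (toAddCircle t)‖ ^ 5)
    _ ≤ N ^ (Fintype.card ι - 5) * ((5 : ℕ) * (C * (P * N ^ 3))) := by
      gcongr
      exact fifth_moment N P hN (by lia) (by lia)
    _ = P * (5 * C * N ^ (Fintype.card ι - 2)) := by
      rw [exponent]
      push_cast
      ring

/-- Circle-method upper bound: for nonzero coefficients and `s ≥ 5`, the number of
solutions in `[N]^s` to `a₁x₁² + ⋯ + a_s x_s² = 0` is `O(N^{s−2})`. -/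
theorem diagonal_quadric_solution_count :
    ∀ s : ℕ, 5 ≤ s → ∀ a : Fin s → ℤ, (∀ i, a i ≠ 0) → ∃ C : ℝ, 0 < C ∧
      ∀ N : ℕ, 1 ≤ N →
        (((Fintype.piFinset fun _ : Fin s => Finset.Icc (1 : ℤ) N).filter
            (fun x => ∑ i, a i * x i ^ 2 = 0)).card : ℝ) ≤ C * (N : ℝ) ^ (s - 2) := by
  intro s hs a ha
  obtain ⟨C, hC, count⟩ := diagonal_quadric_solution_count_general
  exact ⟨C, hC, by simpa using count a (by simpa [ha] using hs) 0⟩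
end
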